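/- Let ρ be a tripartite density matrix on ℂ^{d_A}⊗ℂ^{d_B}⊗ℂ^{d_C} (finite positive dimensions), and define E_{1−I₅}(ρ) = inf{Σ_ℓ p_ℓ (1 − I₅(ψ_ℓ))^{2/3}}, the infimum over all finite decompositions ρ = Σ_ℓ p_ℓ |ψ_ℓ⟩⟨ψ_ℓ| with p_ℓ > 0, Σ_ℓ p_ℓ = 1 and each ψ_ℓ a unit vector, where I₅(ψ) = Tr[(ρ_BC(ψ)^Γ)³] is the third-order negativity of the pure state ψ. Then E_{1−I₅}(ρ) = 0 if and only if ρ is fully separable. -/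

import Mathlib

open scoped BigOperators ComplexOrder
open Matrix

noncomputable section

/-- Partial transpose over the second tensor factor. -/
def ptranspose {d d' : ℕ} (M : Matrix (Fin d × Fin d') (Fin d × Fin d') ℂ) :
    Matrix (Fin d × Fin d') (Fin d × Fin d') ℂ :=
  fun p q => M (p.1, q.2) (q.1, p.2)

/-- Reduced density matrix on the last two factors of a tripartite pure state. -/
def rhoBC (dA dB dC : ℕ) (ψ : Fin dA × Fin dB × Fin dC → ℂ) :
    Matrix (Fin dB × Fin dC) (Fin dB × Fin dC) ℂ :=
  fun p q => ∑ a : Fin dA, ψ (a, p.1, p.2) * (starRingEnd ℂ) (ψ (a, q.1, q.2))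

/-- Third-order negativity of a tripartite pure state. -/
def I5 (dA dB dC : ℕ) (ψ : Fin dA × Fin dB × Fin dC → ℂ) : ℝ :=
  ((ptranspose (rhoBC dA dB dC ψ)) ^ 3).trace.re

/-- The convex-roof quantity `E_{1−I₅}`. -/
def E1mI5 (dA dB dC : ℕ)
    (ρ : Matrix (Fin dA × Fin dB × Fin dC) (Fin dA × Fin dB × Fin dC) ℂ) : ℝ :=
  sInf {x : ℝ | ∃ (m : ℕ) (p : Fin m → ℝ) (ψ : Fin m → Fin dA × Fin dB × Fin dC → ℂ),
    (∀ ℓ, 0 < p ℓ) ∧ (∑ ℓ, p ℓ = 1) ∧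
    (∀ ℓ, ∑ v : Fin dA × Fin dB × Fin dC, ‖ψ ℓ v‖ ^ 2 = 1) ∧
    ρ = ∑ ℓ, (p ℓ : ℂ) • Matrix.vecMulVec (ψ ℓ) (star (ψ ℓ)) ∧
    x = ∑ ℓ, p ℓ * (1 - I5 dA dB dC (ψ ℓ)) ^ ((2 : ℝ) / 3)}

/-- Full separability of a tripartite density matrix. -/
def FullySep (dA dB dC : ℕ)
    (ρ : Matrix (Fin dA × Fin dB × Fin dC) (Fin dA × Fin dB × Fin dC) ℂ) : Prop :=
  ∃ (m : ℕ) (p : Fin m → ℝ)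
    (f : Fin m → Fin dA → ℂ) (g : Fin m → Fin dB → ℂ) (h : Fin m → Fin dC → ℂ),
    (∀ j, 0 ≤ p j) ∧ (∑ j, p j = 1) ∧
    (∀ j, ∑ v : Fin dA × Fin dB × Fin dC, ‖f j v.1 * g j v.2.1 * h j v.2.2‖ ^ 2 = 1) ∧
    ρ = ∑ j, (p j : ℂ) •
      Matrix.vecMulVec (fun v : Fin dA × Fin dB × Fin dC => f j v.1 * g j v.2.1 * h j v.2.2)
        (star fun v : Fin dA × Fin dB × Fin dC => f j v.1 * g j v.2.1 * h j v.2.2)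

/-!
For a unit vector `ψ`, the number `I₅(ψ)` is the overlap of `ψ⊗ψ⊗ψ` with its image under the
permutation of the three copies that fixes the `A` parts and rotates the `B` and `C` parts in
opposite directions. Hence `1 - I₅(ψ)` is half the squared distance between these two vectors; it
is nonnegative, and it vanishes exactly when `ψ⊗ψ⊗ψ` is invariant, which forces `ψ` to be a product
vector. The graph `ψ ↦ (|ψ⟩⟨ψ|, (1 - I₅(ψ))^(2/3))` over the unit sphere is compact, hence so is its
convex hull, and the infimum defining the convex roof is attained. It is therefore zero exactly when
`ρ` is a mixture of pure states on which `1 - I₅` vanishes.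
-/

section ConvexHull

variable {𝕜 E X : Type*} [Field 𝕜] [LinearOrder 𝕜] [IsStrictOrderedRing 𝕜]
  [AddCommGroup E] [Module 𝕜 E]

theorem exists_fin_affineIndependent_of_mem_convexHull {s : Set E} {e : E}
    (he : e ∈ convexHull 𝕜 s) :
    ∃ (m : ℕ) (w : Fin m → 𝕜) (z : Fin m → E), AffineIndependent 𝕜 z ∧
      (∀ i, 0 < w i) ∧ ∑ i, w i = 1 ∧ (∀ i, z i ∈ s) ∧ e = ∑ i, w i • z i := by
  obtain ⟨ι, _, z, w, hz, hind, hw, hw1, rfl⟩ := eq_pos_convex_span_of_mem_convexHull he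
  let σ := (Fintype.equivFin ι).symm
  exact ⟨Fintype.card ι, w ∘ σ, z ∘ σ, hind.comp_embedding σ.toEmbedding, fun i => hw (σ i),
    (Equiv.sum_comp σ w).trans hw1, fun i => hz ⟨σ i, rfl⟩,
    (Equiv.sum_comp σ fun i => w i • z i).symm⟩

theorem sum_smul_mem_convexHull_image {ι : Type*} [Fintype ι] {f : X → E} {S : Set X}
    {w : ι → 𝕜} {x : ι → X} (hw : ∀ i, 0 ≤ w i) (hw1 : ∑ i, w i = 1) (hx : ∀ i, x i ∈ S) :
    ∑ i, w i • f (x i) ∈ convexHull 𝕜 (f '' S) :=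
  (convex_convexHull 𝕜 _).sum_mem (fun i _ => hw i) hw1
    fun i _ => subset_convexHull 𝕜 _ (Set.mem_image_of_mem f (hx i))

theorem mem_convexHull_image_iff_exists_pos {f : X → E} {S : Set X} {e : E} :
    e ∈ convexHull 𝕜 (f '' S) ↔ ∃ (m : ℕ) (w : Fin m → 𝕜) (x : Fin m → X),
      (∀ i, 0 < w i) ∧ ∑ i, w i = 1 ∧ (∀ i, x i ∈ S) ∧ e = ∑ i, w i • f (x i) := by
  constructor
  · intro he
    obtain ⟨m, w, z, -, hw, hw1, hz, rfl⟩ := exists_fin_affineIndependent_of_mem_convexHull he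
    choose x hx hxz using hz
    exact ⟨m, w, x, hw, hw1, hx, by simp only [hxz]⟩
  · rintro ⟨m, w, x, hw, hw1, hx, rfl⟩
    exact sum_smul_mem_convexHull_image (fun i => (hw i).le) hw1 hx

theorem mem_convexHull_image_iff_exists_nonneg {f : X → E} {S : Set X} {e : E} :
    e ∈ convexHull 𝕜 (f '' S) ↔ ∃ (m : ℕ) (w : Fin m → 𝕜) (x : Fin m → X),
      (∀ i, 0 ≤ w i) ∧ ∑ i, w i = 1 ∧ (∀ i, x i ∈ S) ∧ e = ∑ i, w i • f (x i) := by
  constructor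
  · intro he
    obtain ⟨m, w, x, hw, hrest⟩ := mem_convexHull_image_iff_exists_pos.mp he
    exact ⟨m, w, x, fun i => (hw i).le, hrest⟩
  · rintro ⟨m, w, x, hw, hw1, hx, rfl⟩
    exact sum_smul_mem_convexHull_image hw hw1 hx

end ConvexHull

section CompactConvexHull

variable {E : Type*} [AddCommGroup E] [Module ℝ E]

/-- The convex combinations of `m` points of `s`, repetitions allowed. -/
def convexCombinations (m : ℕ) (s : Set E) : Set E :=
  (fun q : (Fin m → ℝ) × (Fin m → E) => ∑ i, q.1 i • q.2 i) ''
    (stdSimplex ℝ (Fin m) ×ˢ Set.univ.pi fun _ => s)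

theorem convexCombinations_subset_convexHull (m : ℕ) (s : Set E) :
    convexCombinations m s ⊆ convexHull ℝ s := by
  rintro _ ⟨⟨w, z⟩, ⟨⟨hw, hw1⟩, hz⟩, rfl⟩
  exact (convex_convexHull ℝ s).sum_mem (fun i _ => hw i) hw1
    fun i _ => subset_convexHull ℝ s (hz i trivial)

theorem convexHull_eq_biUnion_convexCombinations [FiniteDimensional ℝ E] (s : Set E) :
    convexHull ℝ s = ⋃ m ∈ Set.Iic (Module.finrank ℝ E + 1), convexCombinations m s := by
  refine Set.Subset.antisymm (fun e he => ?_)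
    (Set.iUnion₂_subset fun m _ => convexCombinations_subset_convexHull m s)
  obtain ⟨m, w, z, hind, hw, hw1, hz, rfl⟩ := exists_fin_affineIndependent_of_mem_convexHull he
  have hm : m ≤ Module.finrank ℝ E + 1 := by
    simpa using hind.card_le_finrank_succ.trans
      (Nat.succ_le_succ (Submodule.finrank_le (vectorSpan ℝ (Set.range z))))
  exact Set.mem_biUnion hm ⟨(w, z), ⟨⟨fun i => (hw i).le, hw1⟩, fun i _ => hz i⟩, rfl⟩

variable [TopologicalSpace E] [ContinuousAdd E] [ContinuousSMul ℝ E] {s : Set E}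

theorem isCompact_convexCombinations (m : ℕ) (hs : IsCompact s) :
    IsCompact (convexCombinations m s) :=
  ((isCompact_stdSimplex ℝ (Fin m)).prod (isCompact_univ_pi fun _ => hs)).image (by fun_prop)

theorem isCompact_convexHull_of_finiteDimensional [FiniteDimensional ℝ E] (hs : IsCompact s) :
    IsCompact (convexHull ℝ s) := by
  rw [convexHull_eq_biUnion_convexCombinations]
  exact (Set.finite_Iic _).isCompact_biUnion fun m _ => isCompact_convexCombinations m hs

end CompactConvexHull

section ConvexRoof

variable {X E : Type*} [AddCommGroup E] [Module ℝ E]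
  {π : X → E} {φ : X → ℝ} {S : Set X} {e : E} {r : ℝ}

/-- The averages `∑ w i * φ (x i)` over all finite decompositions `e = ∑ w i • π (x i)` with
positive weights and points `x i ∈ S`. Their infimum is the convex roof of `φ` at `e`. -/
def roofValues (π : X → E) (φ : X → ℝ) (S : Set X) (e : E) : Set ℝ :=
  {r | ∃ (m : ℕ) (w : Fin m → ℝ) (x : Fin m → X), (∀ i, 0 < w i) ∧ ∑ i, w i = 1 ∧
    (∀ i, x i ∈ S) ∧ e = ∑ i, w i • π (x i) ∧ r = ∑ i, w i * φ (x i)}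

theorem mem_roofValues_iff_mem_convexHull :
    r ∈ roofValues π φ S e ↔ (e, r) ∈ convexHull ℝ ((fun x => (π x, φ x)) '' S) := by
  simp only [mem_convexHull_image_iff_exists_pos, roofValues, Set.mem_ofPred_eq, Prod.ext_iff,
    Prod.fst_sum, Prod.snd_sum, Prod.smul_fst, Prod.smul_snd, smul_eq_mul]

theorem roofValues_nonempty_iff :
    (roofValues π φ S e).Nonempty ↔ e ∈ convexHull ℝ (π '' S) := by
  rw [mem_convexHull_image_iff_exists_pos]
  constructor
  · rintro ⟨r, m, w, x, hw, hw1, hx, he, -⟩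
    exact ⟨m, w, x, hw, hw1, hx, he⟩
  · rintro ⟨m, w, x, hw, hw1, hx, he⟩
    exact ⟨_, m, w, x, hw, hw1, hx, he, rfl⟩

theorem nonneg_of_mem_roofValues (hφ : ∀ x ∈ S, 0 ≤ φ x) (hr : r ∈ roofValues π φ S e) :
    0 ≤ r := by
  obtain ⟨m, w, x, hw, -, hx, -, rfl⟩ := hr
  exact Finset.sum_nonneg fun i _ => mul_nonneg (hw i).le (hφ _ (hx i))

theorem zero_mem_roofValues_iff (hφ : ∀ x ∈ S, 0 ≤ φ x) :
    0 ∈ roofValues π φ S e ↔ e ∈ convexHull ℝ (π '' {x ∈ S | φ x = 0}) := by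
  rw [mem_convexHull_image_iff_exists_pos]
  constructor
  · rintro ⟨m, w, x, hw, hw1, hx, he, h0⟩
    have hterm := (Fintype.sum_eq_zero_iff_of_nonneg
      fun i => mul_nonneg (hw i).le (hφ _ (hx i))).mp h0.symm
    have hφ0 (i : Fin m) : φ (x i) = 0 :=
      (mul_eq_zero.mp (congrFun hterm i)).resolve_left (hw i).ne'
    exact ⟨m, w, x, hw, hw1, fun i => ⟨hx i, hφ0 i⟩, he⟩
  · rintro ⟨m, w, x, hw, hw1, hx, he⟩
    exact ⟨m, w, x, hw, hw1, fun i => (hx i).1, he, by simp [(hx _).2]⟩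

variable [TopologicalSpace X] [TopologicalSpace E] [ContinuousAdd E] [ContinuousSMul ℝ E]
  [T2Space E] [FiniteDimensional ℝ E]

theorem isClosed_roofValues (hS : IsCompact S) (hπ : ContinuousOn π S) (hφ : ContinuousOn φ S) :
    IsClosed (roofValues π φ S e) := by
  have hgraph : IsClosed (convexHull ℝ ((fun x => (π x, φ x)) '' S)) :=
    (isCompact_convexHull_of_finiteDimensional (hS.image_of_continuousOn (hπ.prodMk hφ))).isClosed
  convert hgraph.preimage (Continuous.prodMk_right e) using 1
  exact Set.ext fun r => mem_roofValues_iff_mem_convexHull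

theorem sInf_roofValues_eq_zero_iff (hS : IsCompact S) (hπ : ContinuousOn π S)
    (hφ : ContinuousOn φ S) (hφ_nonneg : ∀ x ∈ S, 0 ≤ φ x) (he : e ∈ convexHull ℝ (π '' S)) :
    sInf (roofValues π φ S e) = 0 ↔ e ∈ convexHull ℝ (π '' {x ∈ S | φ x = 0}) := by
  have hlower : 0 ∈ lowerBounds (roofValues π φ S e) :=
    fun _ => nonneg_of_mem_roofValues hφ_nonneg
  rw [← zero_mem_roofValues_iff hφ_nonneg]
  constructor
  · intro hInf
    rw [← hInf]
    exact (isClosed_roofValues hS hπ hφ).csInf_mem (roofValues_nonempty_iff.mpr he) ⟨0, hlower⟩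
  · exact fun h0 => IsLeast.csInf_eq ⟨h0, hlower⟩

end ConvexRoof

section PureStates

variable {𝕜 V : Type*} [RCLike 𝕜]

/-- The rank-one matrix `|ψ⟩⟨ψ|`. -/
def pureState (ψ : V → 𝕜) : Matrix V V 𝕜 := vecMulVec ψ (star ψ)

theorem continuous_pureState : Continuous (pureState : (V → 𝕜) → Matrix V V 𝕜) :=
  continuous_id.matrix_vecMulVec continuous_star

variable [Fintype V]

variable (𝕜 V) in
/-- The unit sphere of `ℓ²(V)`, as a set of plain functions because the sup norm is the norm
Mathlib puts on `V → 𝕜`. -/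
def unitVectors : Set (V → 𝕜) := {ψ | ∑ v, ‖ψ v‖ ^ 2 = 1}

theorem ofLp_mem_unitVectors_iff {x : EuclideanSpace 𝕜 V} :
    x.ofLp ∈ unitVectors 𝕜 V ↔ ‖x‖ = 1 := by
  rw [EuclideanSpace.norm_eq, Real.sqrt_eq_one]
  rfl

theorem isCompact_unitVectors : IsCompact (unitVectors 𝕜 V) := by
  convert (isCompact_sphere (0 : EuclideanSpace 𝕜 V) 1).image (PiLp.continuous_ofLp 2 _)
  ext ψ
  constructor
  · exact fun hψ => ⟨WithLp.toLp 2 ψ, by simpa [← ofLp_mem_unitVectors_iff] using hψ, rfl⟩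
  · rintro ⟨x, hx, rfl⟩
    exact ofLp_mem_unitVectors_iff.mpr (mem_sphere_zero_iff_norm.mp hx)

theorem eq_sum_eigenvalues_smul_pureState [DecidableEq V] {A : Matrix V V 𝕜}
    (hA : A.IsHermitian) :
    A = ∑ i, hA.eigenvalues i • pureState (hA.eigenvectorBasis i).ofLp := by
  ext a b
  conv_lhs => rw [hA.spectral_theorem, Unitary.conjStarAlgAut_apply, Matrix.mul_apply]
  rw [Matrix.sum_apply]
  refine Finset.sum_congr rfl fun i _ => ?_
  simp only [Matrix.mul_diagonal, Matrix.star_apply, IsHermitian.eigenvectorUnitary_apply,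
    Function.comp_apply, pureState, Matrix.smul_apply, vecMulVec_apply, Pi.star_apply,
    RCLike.real_smul_eq_coe_mul]
  ring

theorem mem_convexHull_pureState {ρ : Matrix V V 𝕜} (hρ : ρ.PosSemidef) (htr : ρ.trace = 1) :
    ρ ∈ convexHull ℝ (pureState '' unitVectors 𝕜 V) := by
  classical
  have hsum : ∑ i, hρ.1.eigenvalues i = 1 := by
    have htrace := hρ.1.trace_eq_sum_eigenvalues
    rw [htr] at htrace
    exact_mod_cast htrace.symm
  rw [eq_sum_eigenvalues_smul_pureState hρ.1]
  exact sum_smul_mem_convexHull_image hρ.eigenvalues_nonneg hsum fun i =>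
    ofLp_mem_unitVectors_iff.mpr (hρ.1.eigenvectorBasis.orthonormal.1 i)

end PureStates

section ThreeCopies

/-- The vector `ψ ⊗ ψ ⊗ ψ`. -/
def tensorCube {V R : Type*} [Mul R] (ψ : V → R) (t : V × V × V) : R :=
  ψ t.1 * ψ t.2.1 * ψ t.2.2

/-- The permutation of three copies of a tripartite index that fixes the first parts, moves the
second parts one copy down cyclically, and moves the third parts one copy up. -/
def permCopies (α β γ : Type*) :
    Equiv.Perm ((α × β × γ) × (α × β × γ) × (α × β × γ)) where
  toFun | ((a₁, b₁, c₁), (a₂, b₂, c₂), (a₃, b₃, c₃)) => ((a₁, b₂, c₃), (a₂, b₃, c₁), (a₃, b₁, c₂))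
  invFun | ((a₁, b₁, c₁), (a₂, b₂, c₂), (a₃, b₃, c₃)) => ((a₁, b₃, c₂), (a₂, b₁, c₃), (a₃, b₂, c₁))
  left_inv _ := rfl
  right_inv _ := rfl

/-- A tripartite vector of the form `f ⊗ g ⊗ h`. -/
def IsProductVector {α β γ R : Type*} [Mul R] (ψ : α × β × γ → R) : Prop :=
  ∃ (f : α → R) (g : β → R) (h : γ → R), ψ = fun v => f v.1 * g v.2.1 * h v.2.2

theorem forall_tensorCube_permCopies_eq_iff {α β γ K : Type*} [Field K] {ψ : α × β × γ → K} :
    (∀ t, tensorCube ψ t = tensorCube ψ (permCopies α β γ t)) ↔ IsProductVector ψ := by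
  constructor
  · intro hinv
    by_cases hψ : ψ = 0
    · exact ⟨0, 0, 0, hψ.trans (funext fun _ => by simp)⟩
    obtain ⟨⟨a₀, b₀, c₀⟩, (h₀ : ψ (a₀, b₀, c₀) ≠ 0)⟩ := Function.ne_iff.mp hψ
    refine ⟨fun a => ψ (a, b₀, c₀) / ψ (a₀, b₀, c₀), fun b => ψ (a₀, b, c₀) / ψ (a₀, b₀, c₀),
      fun c => ψ (a₀, b₀, c), ?_⟩
    funext ⟨a, b, c⟩
    have hcross : ψ (a, b, c) * ψ (a₀, b₀, c₀) * ψ (a₀, b₀, c₀) =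
        ψ (a, b₀, c₀) * ψ (a₀, b₀, c) * ψ (a₀, b, c₀) :=
      hinv ((a, b, c), (a₀, b₀, c₀), (a₀, b₀, c₀))
    field_simp
    linear_combination hcross
  · rintro ⟨f, g, h, rfl⟩ ⟨⟨a₁, b₁, c₁⟩, ⟨a₂, b₂, c₂⟩, ⟨a₃, b₃, c₃⟩⟩
    simp only [tensorCube, permCopies, Equiv.coe_fn_mk]
    ring

variable {V : Type*} [Fintype V]

theorem sum_norm_tensorCube_sq {R : Type*} [NonUnitalSeminormedRing R] [NormMulClass R]
    (ψ : V → R) :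
    ∑ t, ‖tensorCube ψ t‖ ^ 2 = (∑ v, ‖ψ v‖ ^ 2) ^ 3 := by
  simp only [tensorCube, Fintype.sum_prod_type, norm_mul, mul_pow, ← Finset.mul_sum,
    ← Finset.sum_mul]
  ring

theorem sum_norm_sub_comp_perm_sq {𝕜 : Type*} [RCLike 𝕜] (x : V → 𝕜) (σ : Equiv.Perm V) :
    ∑ v, ‖x v - x (σ v)‖ ^ 2 =
      2 * (∑ v, ‖x v‖ ^ 2 - RCLike.re (∑ v, x v * starRingEnd 𝕜 (x (σ v)))) := by
  have hexpand (z w : 𝕜) :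
      ‖z - w‖ ^ 2 = ‖z‖ ^ 2 + ‖w‖ ^ 2 - 2 * RCLike.re (z * starRingEnd 𝕜 w) := by
    simpa only [RCLike.normSq_eq_def'] using RCLike.normSq_sub z w
  simp only [hexpand, Finset.sum_sub_distrib, Finset.sum_add_distrib, ← Finset.mul_sum, map_sum,
    Equiv.sum_comp σ fun v => ‖x v‖ ^ 2]
  ring

theorem trace_pow_three {R : Type*} [Semiring R] [DecidableEq V] (M : Matrix V V R) :
    (M ^ 3).trace = ∑ i, ∑ j, ∑ k, M i j * M j k * M k i := by
  simp only [pow_succ' M, pow_zero, mul_one, Matrix.trace, Matrix.diag, Matrix.mul_apply,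
    Finset.mul_sum, mul_assoc]

theorem sum_mul_sum_mul_sum {ι κ τ R : Type*} [Fintype ι] [Fintype κ] [Fintype τ]
    [NonUnitalNonAssocSemiring R] (f : ι → R) (g : κ → R) (h : τ → R) :
    (∑ i, f i) * (∑ j, g j) * ∑ k, h k = ∑ x : ι × κ × τ, f x.1 * g x.2.1 * h x.2.2 := by
  simp only [Fintype.sum_prod_type, ← Finset.mul_sum, ← Finset.sum_mul]

end ThreeCopies

section ThirdOrderNegativity

variable {dA dB dC : ℕ}

theorem trace_ptranspose_rhoBC_pow_three (ψ : Fin dA × Fin dB × Fin dC → ℂ) :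
    (ptranspose (rhoBC dA dB dC ψ) ^ 3).trace =
      ∑ t, tensorCube ψ t * starRingEnd ℂ (tensorCube ψ (permCopies _ _ _ t)) := by
  -- Because of the partial transpose, the `i`-th factor of the trace contains `ψ (aᵢ, bᵢ, cᵢ₊₁)`.
  let copies : (Fin dB × Fin dC) × (Fin dB × Fin dC) × (Fin dB × Fin dC) ×
      Fin dA × Fin dA × Fin dA ≃
      (Fin dA × Fin dB × Fin dC) × (Fin dA × Fin dB × Fin dC) × (Fin dA × Fin dB × Fin dC) :=
    { toFun := fun ((b₁, c₁), (b₂, c₂), (b₃, c₃), a₁, a₂, a₃) =>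
        ((a₁, b₁, c₂), (a₂, b₂, c₃), (a₃, b₃, c₁))
      invFun := fun ((a₁, b₁, c₂), (a₂, b₂, c₃), (a₃, b₃, c₁)) =>
        ((b₁, c₁), (b₂, c₂), (b₃, c₃), a₁, a₂, a₃)
      left_inv := fun _ => rfl
      right_inv := fun _ => rfl }
  rw [trace_pow_three, ← Equiv.sum_comp copies]
  simp only [ptranspose, rhoBC, sum_mul_sum_mul_sum, ← Fintype.sum_prod_type']
  refine Finset.sum_congr rfl fun x _ => ?_
  simp only [copies, tensorCube, permCopies, Equiv.coe_fn_mk, map_mul]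
  ring

theorem I5_eq_re_sum_tensorCube (ψ : Fin dA × Fin dB × Fin dC → ℂ) :
    I5 dA dB dC ψ =
      (∑ t, tensorCube ψ t * starRingEnd ℂ (tensorCube ψ (permCopies _ _ _ t))).re :=
  congrArg Complex.re (trace_ptranspose_rhoBC_pow_three ψ)

theorem continuous_I5 : Continuous (I5 dA dB dC) := by
  simp only [funext I5_eq_re_sum_tensorCube, tensorCube]
  fun_prop

variable {ψ : Fin dA × Fin dB × Fin dC → ℂ}

theorem sum_norm_tensorCube_sub_permCopies_sq (hψ : ψ ∈ unitVectors ℂ _) :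
    ∑ t, ‖tensorCube ψ t - tensorCube ψ (permCopies _ _ _ t)‖ ^ 2 = 2 * (1 - I5 dA dB dC ψ) := by
  have hunit : ∑ v, ‖ψ v‖ ^ 2 = 1 := hψ
  rw [sum_norm_sub_comp_perm_sq, sum_norm_tensorCube_sq, hunit, one_pow, I5_eq_re_sum_tensorCube]
  rfl

theorem one_sub_I5_nonneg (hψ : ψ ∈ unitVectors ℂ _) : 0 ≤ 1 - I5 dA dB dC ψ := by
  have hsum : 0 ≤ 2 * (1 - I5 dA dB dC ψ) :=
    sum_norm_tensorCube_sub_permCopies_sq hψ ▸ Finset.sum_nonneg fun _ _ => by positivity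
  linarith

theorem one_sub_I5_eq_zero_iff_isProductVector (hψ : ψ ∈ unitVectors ℂ _) :
    1 - I5 dA dB dC ψ = 0 ↔ IsProductVector ψ := by
  have hdist := sum_norm_tensorCube_sub_permCopies_sq hψ
  calc 1 - I5 dA dB dC ψ = 0
      ↔ ∑ t, ‖tensorCube ψ t - tensorCube ψ (permCopies _ _ _ t)‖ ^ 2 = 0 := by simp [hdist]
    _ ↔ ∀ t, tensorCube ψ t = tensorCube ψ (permCopies _ _ _ t) := by
      simp [Finset.sum_eq_zero_iff_of_nonneg, sub_eq_zero]
    _ ↔ IsProductVector ψ := forall_tensorCube_permCopies_eq_iff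

variable {ρ : Matrix (Fin dA × Fin dB × Fin dC) (Fin dA × Fin dB × Fin dC) ℂ}

theorem E1mI5_eq_sInf_roofValues :
    E1mI5 dA dB dC ρ = sInf (roofValues pureState
      (fun ψ => (1 - I5 dA dB dC ψ) ^ ((2 : ℝ) / 3)) (unitVectors ℂ _) ρ) :=
  rfl

theorem fullySep_iff_mem_convexHull :
    FullySep dA dB dC ρ ↔
      ρ ∈ convexHull ℝ (pureState '' {ψ ∈ unitVectors ℂ _ | IsProductVector ψ}) := by
  rw [mem_convexHull_image_iff_exists_nonneg]
  constructor
  · rintro ⟨m, p, f, g, h, hp, hp1, hunit, hρ⟩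
    exact ⟨m, p, _, hp, hp1, fun j => ⟨hunit j, f j, g j, h j, rfl⟩, hρ⟩
  · rintro ⟨m, p, ψ, hp, hp1, hψ, hρ⟩
    choose hunit f g h hprod using hψ
    obtain rfl : ψ = _ := funext hprod
    exact ⟨m, p, f, g, h, hp, hp1, hunit, hρ⟩

end ThirdOrderNegativity

theorem E1mI5_eq_zero_iff_fullySep
    (dA dB dC : ℕ) (hdA : 0 < dA) (hdB : 0 < dB) (hdC : 0 < dC)
    (ρ : Matrix (Fin dA × Fin dB × Fin dC) (Fin dA × Fin dB × Fin dC) ℂ)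
    (hρ : ρ.PosSemidef) (htr : ρ.trace = 1) :
    E1mI5 dA dB dC ρ = 0 ↔ FullySep dA dB dC ρ := by
  have hzero : {ψ ∈ unitVectors ℂ _ | (1 - I5 dA dB dC ψ) ^ ((2 : ℝ) / 3) = 0} =
      {ψ ∈ unitVectors ℂ _ | IsProductVector ψ} :=
    Set.ext fun ψ => and_congr_right fun hψ =>
      (Real.rpow_eq_zero (one_sub_I5_nonneg hψ) (by norm_num)).trans
        (one_sub_I5_eq_zero_iff_isProductVector hψ)
  have hcont : Continuous fun ψ => (1 - I5 dA dB dC ψ) ^ ((2 : ℝ) / 3) :=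
    (continuous_const.sub continuous_I5).rpow_const fun _ => Or.inr (by norm_num)
  rw [E1mI5_eq_sInf_roofValues, fullySep_iff_mem_convexHull, ← hzero]
  exact sInf_roofValues_eq_zero_iff isCompact_unitVectors continuous_pureState.continuousOn
    hcont.continuousOn (fun ψ hψ => Real.rpow_nonneg (one_sub_I5_nonneg hψ) _)
    (mem_convexHull_pureState hρ htr)

end
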